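/- Let μ and μ' be finite positive Borel measures on ℝ with odd rearrangements v̂ and v̂' respectively. Then μ ⪯ μ' if and only if v̂(x) ≤ v̂'(x) for all x > 0. (Formula (2.6) of Proposition 1.) -/

import Mathlib

/-!
The proof is the bathtub principle with a single threshold. For a density `f ≥ 0`, every `c ≥ 0` and
every `A`, the bound `f ≤ c + (f - c)⁺` gives `∫_A f ≤ c |A| + ∫ (f - c)⁺`, with equality when
`{f > c} ⊆ A ⊆ {f ≥ c}`. If `|{f > c}| ≤ s`, and `|{f > t}| ≥ s` for all `t < c`, then sets `A` with
`|A| = s` lying between `{f > c}` and `{f > t}`, `t ↑ c`, show that the supremum of `∫_A f` over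
`|A| ≤ s` is `c s + ∫ (f - c)⁺`. A symmetric rearrangement `ẑ` of `z` supplies the threshold for
`s = 2r`, namely `c = ẑ(r)`; both `z` and `ẑ` give the same value, and for `ẑ` it is
`∫_{-r}^r ẑ`. The singular part lives on a null set, so it contributes its full mass, and
`sup {μ(A) : |A| ≤ 2r} = 2 v̂(r)`.
-/

open MeasureTheory Set Filter
open scoped ENNReal

noncomputable section

/-- `waveSup μ s = sup { μ(A) : A ⊆ ℝ Borel, Leb(A) ≤ s }`. -/
def waveSup (μ : Measure ℝ) (s : ℝ) : ℝ≥0∞ :=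
  ⨆ (A : Set ℝ) (_ : MeasurableSet A) (_ : volume A ≤ ENNReal.ofReal s), μ A

/-- The partial ordering `μ ⪯ μ'` among positive measures on `ℝ`. -/
def MeasPrec (μ μ' : Measure ℝ) : Prop :=
  ∀ s > 0, waveSup μ s ≤ waveSup μ' s

open scoped Topology

section Bathtub

variable {α : Type*} [MeasurableSpace α] {ν : Measure α} {f : α → ℝ≥0∞}

lemma setLIntegral_le_mul_add_lintegral_tsub (c : ℝ≥0∞) (A : Set α) :
    ∫⁻ x in A, f x ∂ν ≤ c * ν A + ∫⁻ x, (f x - c) ∂ν :=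
  calc ∫⁻ x in A, f x ∂ν
    _ ≤ ∫⁻ x in A, (c + (f x - c)) ∂ν := lintegral_mono fun _ => le_add_tsub
    _ = c * ν A + ∫⁻ x in A, (f x - c) ∂ν := by
      rw [lintegral_add_left measurable_const, setLIntegral_const]
    _ ≤ c * ν A + ∫⁻ x, (f x - c) ∂ν := by grw [setLIntegral_le_lintegral]

lemma mul_add_lintegral_tsub_le_setLIntegral {t c : ℝ≥0∞} {A : Set α} (htc : t ≤ c)
    (hcA : {x | c < f x} ⊆ A) (hAt : ∀ᵐ x ∂ν.restrict A, t ≤ f x) :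
    t * ν A + ∫⁻ x, (f x - c) ∂ν ≤ ∫⁻ x in A, f x ∂ν := by
  have hsupp : (fun x => f x - c).support ⊆ A := fun x hx =>
    hcA (tsub_pos_iff_lt.1 (pos_iff_ne_zero.2 hx))
  rw [← setLIntegral_eq_of_support_subset hsupp, ← setLIntegral_const,
    ← lintegral_add_left measurable_const]
  refine lintegral_mono_ae (hAt.mono fun x hx => ?_)
  rcases le_total (f x) c with hfc | hcf
  · rwa [tsub_eq_zero_of_le hfc, add_zero]
  · grw [htc, add_tsub_cancel_of_le hcf]

end Bathtub

section NullSingletonClass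

variable {ν : Measure ℝ} [NullSingletonClass ν] [IsLocallyFiniteMeasure ν]

lemma exists_measurableSet_subset_measure_eq {E : Set ℝ} (hE : MeasurableSet E) {s : ℝ≥0∞}
    (hs : s ≤ ν E) : ∃ A ⊆ E, MeasurableSet A ∧ ν A = s := by
  rcases hs.eq_or_lt with rfl | hlt
  · exact ⟨E, subset_rfl, hE, rfl⟩
  have hmono : Monotone fun n : ℕ => E ∩ Ioc (-n : ℝ) n := fun m n hmn => by
    dsimp only
    gcongr
  have hunion : ⋃ n : ℕ, E ∩ Ioc (-n : ℝ) n = E := by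
    refine subset_antisymm (iUnion_subset fun n => inter_subset_left) fun x hx => ?_
    obtain ⟨n, hn⟩ := exists_nat_gt |x|
    exact mem_iUnion.2 ⟨n, hx, (abs_lt.1 hn).1, (abs_lt.1 hn).2.le⟩
  rw [← hunion, hmono.measure_iUnion, lt_iSup_iff] at hlt
  obtain ⟨n, hn⟩ := hlt
  have hint (a b : ℝ) : IntervalIntegrable (E.indicator 1) ν a b :=
    (((locallyIntegrable_const (1 : ℝ)).indicator hE).integrableOn_isCompact
      isCompact_uIcc).intervalIntegrable
  have hprim (r : ℝ) (hr : -n ≤ r) :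
      ∫ x in (-n : ℝ)..r, E.indicator 1 x ∂ν = ν.real (E ∩ Ioc (-n : ℝ) r) := by
    rw [intervalIntegral.integral_of_le hr, integral_indicator_one hE,
      measureReal_restrict_apply hE]
  have hfin (r : ℝ) : ν (E ∩ Ioc (-n : ℝ) r) ≠ ∞ :=
    measure_ne_top_of_subset inter_subset_right measure_Ioc_lt_top.ne
  have hnn : (-n : ℝ) ≤ n := by linarith [Nat.cast_nonneg (α := ℝ) n]
  have hmem : s.toReal ∈ Icc (∫ x in (-n : ℝ)..(-n), E.indicator (1 : ℝ → ℝ) x ∂ν)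
      (∫ x in (-n : ℝ)..n, E.indicator (1 : ℝ → ℝ) x ∂ν) := by
    rw [intervalIntegral.integral_same, hprim n hnn]
    exact ⟨ENNReal.toReal_nonneg, ENNReal.toReal_mono (hfin n) hn.le⟩
  obtain ⟨r, hr, hrs⟩ := intermediate_value_Icc hnn
    (intervalIntegral.continuous_primitive hint _).continuousOn hmem
  refine ⟨E ∩ Ioc (-n : ℝ) r, inter_subset_left, hE.inter measurableSet_Ioc, ?_⟩
  exact (ENNReal.toReal_eq_toReal_iff' (hfin r) hn.ne_top).1 ((hprim r hr.1).symm.trans hrs)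

lemma exists_measurableSet_between_measure_eq {P Q : Set ℝ} (hP : MeasurableSet P)
    (hQ : MeasurableSet Q) (hPQ : P ⊆ Q) {s : ℝ≥0∞} (hPs : ν P ≤ s) (hsQ : s ≤ ν Q) :
    ∃ A, P ⊆ A ∧ A ⊆ Q ∧ MeasurableSet A ∧ ν A = s := by
  obtain ⟨B, hB, hBm, hBs⟩ := exists_measurableSet_subset_measure_eq (hQ.diff hP)
    ((tsub_le_tsub_right hsQ _).trans le_measure_sdiff)
  refine ⟨P ∪ B, subset_union_left, union_subset hPQ (hB.trans sdiff_subset), hP.union hBm, ?_⟩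
  rw [measure_union (disjoint_sdiff_right.mono_right hB) hBm, hBs, add_tsub_cancel_of_le hPs]

end NullSingletonClass

section WaveSup

variable {μ μs ρ : Measure ℝ} {s : ℝ}

lemma waveSup_eq_biSup (μ : Measure ℝ) (s : ℝ) :
    waveSup μ s = ⨆ (A : Set ℝ) (_ : MeasurableSet A ∧ volume A ≤ ENNReal.ofReal s), μ A := by
  simp only [waveSup, iSup_and]

lemma le_waveSup {A : Set ℝ} (hA : MeasurableSet A) (hAs : volume A ≤ ENNReal.ofReal s) :
    μ A ≤ waveSup μ s :=
  le_iSup_of_le A (le_iSup₂_of_le hA hAs le_rfl)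

lemma waveSup_add_of_mutuallySingular (hsing : μs ⟂ₘ volume) (s : ℝ) :
    waveSup (μs + ρ) s = μs univ + waveSup ρ s := by
  refine le_antisymm (iSup_le fun A => iSup₂_le fun hA hAs => ?_) ?_
  · exact add_le_add (measure_mono (subset_univ A)) (le_waveSup hA hAs)
  rw [waveSup_eq_biSup ρ, ENNReal.add_biSup' ⟨∅, MeasurableSet.empty, by simp⟩]
  refine iSup₂_le fun A ⟨hA, hAs⟩ => ?_
  obtain ⟨N, hN, hμsN, hvolN⟩ := hsing
  have hμs : μs univ ≤ μs (A ∪ Nᶜ) := by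
    rw [← measure_add_measure_compl hN, hμsN, zero_add]
    exact measure_mono subset_union_right
  calc μs univ + ρ A
    _ ≤ (μs + ρ) (A ∪ Nᶜ) := add_le_add hμs (measure_mono subset_union_left)
    _ ≤ waveSup (μs + ρ) s := le_waveSup (hA.union hN.compl)
      ((measure_union_le _ _).trans (by rwa [hvolN, add_zero]))

theorem waveSup_withDensity_eq_mul_add_lintegral_tsub {f : ℝ → ℝ≥0∞} (hf : Measurable f) {c : ℝ≥0∞}
    (hc : volume {x | c < f x} ≤ ENNReal.ofReal s)
    (ht : ∀ t < c, ENNReal.ofReal s ≤ volume {x | t < f x}) :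
    waveSup (volume.withDensity f) s = c * ENNReal.ofReal s + ∫⁻ x, (f x - c) := by
  have hlevel (t : ℝ≥0∞) : MeasurableSet {x | t < f x} := measurableSet_lt measurable_const hf
  refine le_antisymm (iSup_le fun A => iSup₂_le fun hA hAs => ?_) ?_
  · rw [withDensity_apply _ hA]
    grw [setLIntegral_le_mul_add_lintegral_tsub c A, hAs]
  rcases eq_or_ne c 0 with rfl | hc0
  · calc 0 * ENNReal.ofReal s + ∫⁻ x, (f x - 0)
      _ = 0 * volume {x | 0 < f x} + ∫⁻ x, (f x - 0) := by simp only [zero_mul]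
      _ ≤ ∫⁻ x in {x | 0 < f x}, f x :=
        mul_add_lintegral_tsub_le_setLIntegral le_rfl subset_rfl (ae_of_all _ fun _ => zero_le)
      _ ≤ waveSup (volume.withDensity f) s := by
        rw [← withDensity_apply _ (hlevel 0)]
        exact le_waveSup (hlevel 0) hc
  -- Superlevel sets may have infinite measure, so `{c ≤ f}` can be too small for the supremum to be
  -- attained; hence the limit `t ↑ c`.
  have hbelow (t : ℝ≥0∞) (htc : t < c) :
      t * ENNReal.ofReal s + ∫⁻ x, (f x - c) ≤ waveSup (volume.withDensity f) s := by
    obtain ⟨A, hcA, hAt, hA, hAs⟩ := exists_measurableSet_between_measure_eq (hlevel c) (hlevel t)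
      (fun x hx => htc.trans hx) hc (ht t htc)
    rw [← hAs]
    grw [mul_add_lintegral_tsub_le_setLIntegral htc.le hcA
        (ae_restrict_of_forall_mem hA fun x hx => (hAt hx).le),
      ← withDensity_apply _ hA, le_waveSup hA hAs.le]
  have hlim : Tendsto (fun t => t * ENNReal.ofReal s + ∫⁻ x, (f x - c)) (𝓝[<] c)
      (𝓝 (c * ENNReal.ofReal s + ∫⁻ x, (f x - c))) :=
    ((ENNReal.Tendsto.mul_const tendsto_id (.inl hc0)).add_const _).mono_left nhdsWithin_le_nhds
  have : NeZero c := ⟨hc0⟩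
  exact le_of_tendsto hlim (eventually_nhdsWithin_of_forall hbelow)

end WaveSup

lemma lintegral_ofReal_eq_lintegral_meas_lt {α : Type*} [MeasurableSpace α] {ν : Measure α}
    {f : α → ℝ} (hf : AEMeasurable f ν) :
    ∫⁻ x, ENNReal.ofReal (f x) ∂ν = ∫⁻ t in Ioi (0 : ℝ), ν {x | t < f x} :=
  calc ∫⁻ x, ENNReal.ofReal (f x) ∂ν
    _ = ∫⁻ x, ENNReal.ofReal (max (f x) 0) ∂ν := by simp
    _ = ∫⁻ t in Ioi (0 : ℝ), ν {x | t < max (f x) 0} :=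
      lintegral_eq_lintegral_meas_lt ν (ae_of_all _ fun _ => le_max_right _ _)
        (hf.max aemeasurable_const)
    _ = ∫⁻ t in Ioi (0 : ℝ), ν {x | t < f x} :=
      setLIntegral_congr_fun measurableSet_Ioi fun t (ht : 0 < t) => by
        simp only [lt_max_iff, ht.not_gt, or_false]

lemma lintegral_ofReal_eq_of_measure_superlevel_eq {α β : Type*} [MeasurableSpace α]
    [MeasurableSpace β] {ν : Measure α} {ρ : Measure β} {f : α → ℝ} {g : β → ℝ}
    (hf : AEMeasurable f ν) (hg : AEMeasurable g ρ)
    (hfg : ∀ t > 0, ν {x | t < f x} = ρ {x | t < g x}) :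
    ∫⁻ x, ENNReal.ofReal (f x) ∂ν = ∫⁻ x, ENNReal.ofReal (g x) ∂ρ := by
  rw [lintegral_ofReal_eq_lintegral_meas_lt hf,
    lintegral_ofReal_eq_lintegral_meas_lt hg]
  exact setLIntegral_congr_fun measurableSet_Ioi hfg

lemma measure_superlevel_le_of_forall_gt {α β : Type*} [MeasurableSpace α] {ν : Measure α}
    [LinearOrder β] [DenselyOrdered β] [NoMaxOrder β] [TopologicalSpace β] [OrderTopology β]
    [FirstCountableTopology β] {f : α → β} {c : β} {b : ℝ≥0∞}
    (hb : ∀ t > c, ν {x | t < f x} ≤ b) : ν {x | c < f x} ≤ b := by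
  obtain ⟨u, hu, hcu, hlim⟩ := exists_seq_strictAnti_tendsto c
  have hunion : {x | c < f x} = ⋃ n, {x | u n < f x} := by
    ext x
    simp only [mem_ofPred_eq, mem_iUnion]
    exact ⟨fun hx => (hlim.eventually_lt_const hx).exists, fun ⟨n, hn⟩ => (hcu n).trans hn⟩
  have hmono : Monotone fun n => {x | u n < f x} := fun m n hmn x hx =>
    (hu.antitone hmn).trans_lt hx
  rw [hunion, hmono.measure_iUnion]
  exact iSup_le fun n => hb _ (hcu n)

lemma apply_le_apply_of_abs_le_abs {β : Type*} [Preorder β] {f : ℝ → β}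
    (heven : ∀ x, f (-x) = f x) (hanti : AntitoneOn f (Ioi 0))
    {x y : ℝ} (hx : x ≠ 0)
    (hxy : |x| ≤ |y|) : f y ≤ f x := by
  have habs (w : ℝ) : f |w| = f w := by
    rcases abs_choice w with hw | hw <;> rw [hw]
    exact heven w
  rw [← habs x, ← habs y]
  exact hanti (abs_pos.2 hx) ((abs_pos.2 hx).trans_le hxy) hxy

lemma aemeasurable_of_even_of_antitoneOn {f : ℝ → ℝ} (heven : ∀ x, f (-x) = f x)
    (hanti : AntitoneOn f (Ioi 0)) : AEMeasurable f := by
  have hmono : MonotoneOn f (Iio 0) := fun x hx y hy hxy => by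
    rw [← heven x, ← heven y]
    exact hanti (mem_Ioi.2 (neg_pos.2 hy)) (mem_Ioi.2 (neg_pos.2 hx)) (neg_le_neg hxy)
  have h := aemeasurable_union_iff.2
    ⟨aemeasurable_restrict_of_monotoneOn (μ := volume) measurableSet_Iio hmono,
      aemeasurable_restrict_of_antitoneOn (μ := volume) measurableSet_Ioi hanti⟩
  rwa [Iio_union_Ioi, restrict_compl_singleton] at h

lemma integral_neg_self_of_even {E : Type*} [NormedAddCommGroup E] [NormedSpace ℝ E] {f : ℝ → E}
    (heven : ∀ x, f (-x) = f x) {r : ℝ} (hf : IntervalIntegrable f volume 0 r) :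
    ∫ x in (-r)..r, f x = (2 : ℝ) • ∫ x in 0..r, f x := by
  have hneg : ∫ x in (-r)..0, f x = ∫ x in 0..r, f x := by
    simpa only [heven, neg_zero] using
      (intervalIntegral.integral_comp_neg (a := 0) (b := r) f).symm
  have hf' : IntervalIntegrable f volume (-r) 0 := by
    simpa only [heven, neg_zero] using ((IntervalIntegrable.iff_comp_neg).1 hf).symm
  rw [← intervalIntegral.integral_add_adjacent_intervals hf' hf, hneg, two_smul]

/-- `f` is a symmetric decreasing rearrangement of `z ≥ 0`. The value `f 0` is unconstrained, and
superlevel sets may have infinite measure. -/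
structure IsSymmRearrangement (f z : ℝ → ℝ) : Prop where
  even (x : ℝ) : f (-x) = f x
  nonneg (x : ℝ) : 0 ≤ f x
  antitoneOn : AntitoneOn f (Ioi 0)
  volume_superlevel_eq (c : ℝ) (hc : 0 < c) : volume {x | c < f x} = volume {x | c < z x}

namespace IsSymmRearrangement

variable {f z : ℝ → ℝ} {r : ℝ}

lemma congr_ae {w : ℝ → ℝ} (h : IsSymmRearrangement f z) (hzw : z =ᵐ[volume] w) :
    IsSymmRearrangement f w where
  __ := h
  volume_superlevel_eq c hc := (h.volume_superlevel_eq c hc).trans <| measure_congr <| by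
    filter_upwards [hzw] with x hx
    exact congrArg (c < ·) hx

lemma aemeasurable (h : IsSymmRearrangement f z) : AEMeasurable f :=
  aemeasurable_of_even_of_antitoneOn h.even h.antitoneOn

lemma integrable (h : IsSymmRearrangement f z) (hz : Integrable z) : Integrable f := by
  rw [← lintegral_ofReal_ne_top_iff_integrable h.aemeasurable.aestronglyMeasurable
      (ae_of_all _ h.nonneg),
    lintegral_ofReal_eq_of_measure_superlevel_eq h.aemeasurable hz.aemeasurable
      h.volume_superlevel_eq]
  exact hz.lintegral_lt_top.ne

lemma lintegral_tsub_eq (h : IsSymmRearrangement f z) (hz : AEMeasurable z) {c : ℝ} (hc : 0 ≤ c) :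
    ∫⁻ x, (ENNReal.ofReal (f x) - ENNReal.ofReal c) =
      ∫⁻ x, (ENNReal.ofReal (z x) - ENNReal.ofReal c) := by
  simp only [← ENNReal.ofReal_sub _ hc]
  refine lintegral_ofReal_eq_of_measure_superlevel_eq (h.aemeasurable.sub_const c)
    (hz.sub_const c) fun t ht => ?_
  simpa only [lt_sub_iff_add_lt] using h.volume_superlevel_eq (t + c) (by positivity)

lemma superlevel_subset_Ioo (h : IsSymmRearrangement f z) (hr : 0 < r) :
    {x | f r < f x} ⊆ Ioo (-r) r := fun x (hx : f r < f x) => by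
  by_contra hxr
  have hrx : |r| ≤ |x| := by
    rw [abs_of_pos hr]
    exact not_lt.1 fun hlt => hxr (abs_lt.1 hlt)
  exact hx.not_ge (apply_le_apply_of_abs_le_abs h.even h.antitoneOn hr.ne' hrx)

lemma ae_le_of_mem_Ioo (h : IsSymmRearrangement f z) :
    ∀ᵐ x, x ∈ Ioo (-r) r → f r ≤ f x := by
  filter_upwards [Measure.ae_ne volume 0] with x hx0 hx
  exact apply_le_apply_of_abs_le_abs h.even h.antitoneOn hx0
    ((abs_lt.2 hx).le.trans (le_abs_self r))

lemma volume_superlevel_le (h : IsSymmRearrangement f z) (hr : 0 < r) :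
    volume {x | ENNReal.ofReal (f r) < ENNReal.ofReal (z x)} ≤ volume (Ioo (-r) r) := by
  simp only [ENNReal.ofReal_lt_ofReal_iff_of_nonneg (h.nonneg r)]
  refine measure_superlevel_le_of_forall_gt fun t ht => ?_
  rw [← h.volume_superlevel_eq t ((h.nonneg r).trans_lt ht)]
  exact measure_mono fun x hx => h.superlevel_subset_Ioo hr (ht.trans hx)

lemma le_volume_superlevel (h : IsSymmRearrangement f z) {t : ℝ≥0∞}
    (ht : t < ENNReal.ofReal (f r)) :
    volume (Ioo (-r) r) ≤ volume {x | t < ENNReal.ofReal (z x)} := by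
  simp only [ENNReal.lt_ofReal_iff_toReal_lt ht.ne_top] at ht ⊢
  obtain ⟨q, htq, hqf⟩ := exists_between ht
  calc volume (Ioo (-r) r)
    _ ≤ volume {x | q < f x} :=
      measure_mono_ae (h.ae_le_of_mem_Ioo.mono fun x hx hxr => hqf.trans_le (hx hxr))
    _ = volume {x | q < z x} := h.volume_superlevel_eq q (ENNReal.toReal_nonneg.trans_lt htq)
    _ ≤ volume {x | t.toReal < z x} := measure_mono fun x hx => htq.trans hx

lemma setLIntegral_Ioo_eq (h : IsSymmRearrangement f z) (hr : 0 < r) :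
    ∫⁻ x in Ioo (-r) r, ENNReal.ofReal (f x) =
      ENNReal.ofReal (f r) * volume (Ioo (-r) r) +
        ∫⁻ x, (ENNReal.ofReal (f x) - ENNReal.ofReal (f r)) := by
  refine le_antisymm (setLIntegral_le_mul_add_lintegral_tsub _ _)
    (mul_add_lintegral_tsub_le_setLIntegral le_rfl ?_ ?_)
  · simpa only [ENNReal.ofReal_lt_ofReal_iff_of_nonneg (h.nonneg r)] using
      h.superlevel_subset_Ioo hr
  · rw [ae_restrict_iff' measurableSet_Ioo]
    exact h.ae_le_of_mem_Ioo.mono fun x hx hxr => ENNReal.ofReal_le_ofReal (hx hxr)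

theorem waveSup_withDensity_eq_setLIntegral (h : IsSymmRearrangement f z) (hz : AEMeasurable z)
    (hr : 0 < r) :
    waveSup (volume.withDensity fun x => ENNReal.ofReal (z x)) (2 * r) =
      ∫⁻ x in Ioo (-r) r, ENNReal.ofReal (f x) := by
  wlog hzm : Measurable z generalizing z
  · rw [← this (h.congr_ae hz.ae_eq_mk) hz.measurable_mk.aemeasurable hz.measurable_mk]
    congr 1
    exact withDensity_congr_ae (hz.ae_eq_mk.fun_comp ENNReal.ofReal)
  have hvol : volume (Ioo (-r) r) = ENNReal.ofReal (2 * r) := by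
    rw [Real.volume_Ioo, sub_neg_eq_add, two_mul]
  rw [waveSup_withDensity_eq_mul_add_lintegral_tsub hzm.ennreal_ofReal
      (hvol ▸ h.volume_superlevel_le hr) (fun t ht => hvol ▸ h.le_volume_superlevel ht),
    h.setLIntegral_Ioo_eq hr, hvol, h.lintegral_tsub_eq hz (h.nonneg r)]

end IsSymmRearrangement

/-- `v` is the odd rearrangement of `μ`, computed from the Lebesgue decomposition
`μ = μs + z · Leb` and the symmetric rearrangement `f` of `z`. The measure `μ` itself may be
infinite: local integrability of `f` is what makes `v` finite. -/
structure IsOddRearrangement (v : ℝ → ℝ) (μ μs : Measure ℝ) (z f : ℝ → ℝ) : Prop where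
  isFiniteMeasure : IsFiniteMeasure μs
  mutuallySingular : μs ⟂ₘ volume
  aemeasurable : AEMeasurable z
  nonneg (x : ℝ) : 0 ≤ z x
  eq_add_withDensity : μ = μs + volume.withDensity fun x => ENNReal.ofReal (z x)
  isSymmRearrangement : IsSymmRearrangement f z
  locallyIntegrable : LocallyIntegrable f
  odd (x : ℝ) : v (-x) = -v x
  eq_add_integral (x : ℝ) (hx : 0 < x) : v x = (μs univ).toReal / 2 + ∫ y in 0..x, f y

namespace IsOddRearrangement

variable {v : ℝ → ℝ} {μ μs : Measure ℝ} {z f : ℝ → ℝ} {r : ℝ}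

lemma integral_nonneg (h : IsOddRearrangement v μ μs z f) (hr : 0 ≤ r) :
    0 ≤ ∫ y in 0..r, f y :=
  intervalIntegral.integral_nonneg hr fun y _ => h.isSymmRearrangement.nonneg y

lemma apply_nonneg (h : IsOddRearrangement v μ μs z f) (hr : 0 < r) : 0 ≤ v r := by
  rw [h.eq_add_integral r hr]
  exact add_nonneg (by positivity) (h.integral_nonneg hr.le)

theorem waveSup_eq (h : IsOddRearrangement v μ μs z f) (hr : 0 < r) :
    waveSup μ (2 * r) = ENNReal.ofReal (2 * v r) := by
  have := h.isFiniteMeasure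
  have hf := h.isSymmRearrangement
  have hint : ∫⁻ x in Ioo (-r) r, ENNReal.ofReal (f x) =
      ENNReal.ofReal (2 * ∫ y in 0..r, f y) := by
    rw [← ofReal_integral_eq_lintegral_ofReal
        ((h.locallyIntegrable.integrableOn_isCompact isCompact_Icc).mono_set Ioo_subset_Icc_self)
        (ae_of_all _ hf.nonneg),
      ← integral_Ioc_eq_integral_Ioo, ← intervalIntegral.integral_of_le (by linarith),
      integral_neg_self_of_even hf.even
        (h.locallyIntegrable.integrableOn_isCompact isCompact_uIcc).intervalIntegrable, smul_eq_mul]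
  rw [h.eq_add_withDensity, waveSup_add_of_mutuallySingular h.mutuallySingular,
    hf.waveSup_withDensity_eq_setLIntegral h.aemeasurable hr, hint, h.eq_add_integral r hr, mul_add,
    mul_div_cancel₀ _ two_ne_zero,
    ENNReal.ofReal_add ENNReal.toReal_nonneg (mul_nonneg zero_le_two (h.integral_nonneg hr.le)),
    ENNReal.ofReal_toReal (measure_ne_top _ _)]

end IsOddRearrangement

theorem prec_iff_odd_rearrangement_le_general {v v' : ℝ → ℝ} {μ μs μ' μs' : Measure ℝ}
    {z f z' f' : ℝ → ℝ} (h : IsOddRearrangement v μ μs z f)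
    (h' : IsOddRearrangement v' μ' μs' z' f') : MeasPrec μ μ' ↔ ∀ x > 0, v x ≤ v' x :=
  calc MeasPrec μ μ'
    _ ↔ ∀ r > 0, waveSup μ (2 * r) ≤ waveSup μ' (2 * r) := by
      refine ⟨fun H r hr => H _ (by positivity), fun H s hs => ?_⟩
      simpa only [mul_div_cancel₀ s two_ne_zero] using H (s / 2) (by positivity)
    _ ↔ ∀ r > 0, v r ≤ v' r := forall₂_congr fun r hr => by
      rw [h.waveSup_eq hr, h'.waveSup_eq hr,
        ENNReal.ofReal_le_ofReal_iff (mul_nonneg zero_le_two (h'.apply_nonneg hr)),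
        mul_le_mul_iff_right₀ two_pos]

/-- Formula (2.6) of Proposition 1: for finite positive measures `μ, μ'` with odd
rearrangements `vhat, vhat'`, one has `μ ⪯ μ'` iff `vhat x ≤ vhat' x` for all `x > 0`. -/
theorem prec_iff_odd_rearrangement_le
    (μ μs : Measure ℝ) [IsFiniteMeasure μ] [IsFiniteMeasure μs]
    (z : ℝ → ℝ) (hz_int : Integrable z) (hz_nonneg : ∀ x, 0 ≤ z x)
    (hsing : μs ⟂ₘ volume)
    (hdecomp : μ = μs + volume.withDensity (fun x => ENNReal.ofReal (z x)))
    (zhat : ℝ → ℝ)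
    (hzhat_even : ∀ x, zhat (-x) = zhat x)
    (hzhat_nonneg : ∀ x, 0 ≤ zhat x)
    (hzhat_anti : AntitoneOn zhat (Set.Ioi 0))
    (hzhat_rearr : ∀ c > 0, volume {x | c < zhat x} = volume {x | c < z x})
    (vhat : ℝ → ℝ)
    (hvhat_odd : ∀ x, vhat (-x) = -vhat x)
    (hvhat_pos : ∀ x > 0, vhat x = (μs Set.univ).toReal / 2 + ∫ y in (0:ℝ)..x, zhat y)
    (μ' μs' : Measure ℝ) [IsFiniteMeasure μ'] [IsFiniteMeasure μs']
    (z' : ℝ → ℝ) (hz'_int : Integrable z') (hz'_nonneg : ∀ x, 0 ≤ z' x)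
    (hsing' : μs' ⟂ₘ volume)
    (hdecomp' : μ' = μs' + volume.withDensity (fun x => ENNReal.ofReal (z' x)))
    (zhat' : ℝ → ℝ)
    (hzhat'_even : ∀ x, zhat' (-x) = zhat' x)
    (hzhat'_nonneg : ∀ x, 0 ≤ zhat' x)
    (hzhat'_anti : AntitoneOn zhat' (Set.Ioi 0))
    (hzhat'_rearr : ∀ c > 0, volume {x | c < zhat' x} = volume {x | c < z' x})
    (vhat' : ℝ → ℝ)
    (hvhat'_odd : ∀ x, vhat' (-x) = -vhat' x)
    (hvhat'_pos : ∀ x > 0, vhat' x = (μs' Set.univ).toReal / 2 + ∫ y in (0:ℝ)..x, zhat' y) :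
    MeasPrec μ μ' ↔ ∀ x > 0, vhat x ≤ vhat' x := by
  have hsymm : IsSymmRearrangement zhat z :=
    ⟨hzhat_even, hzhat_nonneg, hzhat_anti, hzhat_rearr⟩
  have hsymm' : IsSymmRearrangement zhat' z' :=
    ⟨hzhat'_even, hzhat'_nonneg, hzhat'_anti, hzhat'_rearr⟩
  exact prec_iff_odd_rearrangement_le_general
    ⟨‹_›, hsing, hz_int.aemeasurable, hz_nonneg, hdecomp, hsymm,
      (hsymm.integrable hz_int).locallyIntegrable, hvhat_odd, hvhat_pos⟩
    ⟨‹_›, hsing', hz'_int.aemeasurable, hz'_nonneg, hdecomp', hsymm',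
      (hsymm'.integrable hz'_int).locallyIntegrable, hvhat'_odd, hvhat'_pos⟩
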